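/- arXiv:2003.12807 — 3 statements merged into one kernel-verified Lean document; each statement's English description precedes it below -/
import Mathlib

section
/- Let V be a real vector space equipped with a symmetric bilinear form B, and let L ∈ V satisfy B(L,L) = 1 and B(v,v) ≤ 0 for every v ∈ V with B(v,L) = 0. Let α ∈ V satisfy B(α,α) = 0 and B(α,L) = 1, let a, b be real numbers with a ≥ 1 and b ≥ 1, and let v₁, v₂ ∈ V satisfy B(v₁,L) = B(v₂,L) = 0 and B(α,v₁) = B(α,v₂) = 1. Set u := a·α + v₁ and w := b·α + v₂, and assume B(u,u) = 1 and B(w,w) ≥ 0. Then B(u,w) ≤ (√a + √b)². -/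
/-!
Isotropy of `α` and `B α vᵢ = 1` give `B u u = 2a + B v₁ v₁`, `B w w = 2b + B v₂ v₂` and
`B u w = a + b + B v₁ v₂`. Hence `-B v₁ v₁ = 2a - 1` and `-B v₂ v₂ ≤ 2b`, and the claim reduces to
`B v₁ v₂ ≤ 2 √a √b`. This is the Cauchy-Schwarz inequality for the semidefinite form `-B` on the
orthogonal complement of `L`, obtained by testing negativity on the single vector
`√b • v₁ + √a • v₂`.
-/

theorem stmt_4 {V : Type*} [AddCommGroup V] [Module ℝ V]
    (B : V →ₗ[ℝ] V →ₗ[ℝ] ℝ) (hsymm : ∀ u v : V, B u v = B v u)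
    (L : V) (hL : B L L = 1) (hneg : ∀ v : V, B v L = 0 → B v v ≤ 0)
    (α : V) (hαα : B α α = 0) (hαL : B α L = 1)
    (a b : ℝ) (ha : 1 ≤ a) (hb : 1 ≤ b)
    (v₁ v₂ : V) (hv₁L : B v₁ L = 0) (hv₂L : B v₂ L = 0)
    (hαv₁ : B α v₁ = 1) (hαv₂ : B α v₂ = 1)
    (u w : V) (hu : u = a • α + v₁) (hw : w = b • α + v₂)
    (huu : B u u = 1) (hww : 0 ≤ B w w) :
    B u w ≤ (Real.sqrt a + Real.sqrt b) ^ 2 := by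
  subst hu hw
  have h1 : B v₁ α = 1 := by rw [hsymm, hαv₁]
  have h2 : B v₂ α = 1 := by rw [hsymm, hαv₂]
  have h21 : B v₂ v₁ = B v₁ v₂ := hsymm _ _
  have hs : 0 < √a := Real.sqrt_pos.mpr (by linarith)
  have ht : 0 < √b := Real.sqrt_pos.mpr (by linarith)
  have hsa : √a ^ 2 = a := Real.sq_sqrt (by linarith)
  have htb : √b ^ 2 = b := Real.sq_sqrt (by linarith)
  have key := hneg (√b • v₁ + √a • v₂) (by simp [hv₁L, hv₂L])
  simp only [map_add, map_smul, LinearMap.add_apply, LinearMap.smul_apply, smul_eq_mul,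
    hαα, hαv₁, hαv₂, h1, h2, h21] at key huu hww ⊢
  have e1 : B v₁ v₁ = 1 - 2 * a := by linarith
  have e2 : -(2 * b) ≤ B v₂ v₂ := by linarith
  have key' : b * (1 - 2 * a) + 2 * (√a * √b) * B v₁ v₂ + a * B v₂ v₂ ≤ 0 := by
    rw [e1] at key
    linear_combination key - (1 - 2 * a) * htb - B v₂ v₂ * hsa
  have hab : (√a * √b) ^ 2 = a * b := by rw [mul_pow, hsa, htb]
  have hst : 0 < √a * √b := mul_pos hs ht
  have hc : B v₁ v₂ ≤ 2 * (√a * √b) := by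
    have hm : a * -(2 * b) ≤ a * B v₂ v₂ := mul_le_mul_of_nonneg_left e2 (by linarith)
    refine le_of_mul_le_mul_left ?_ hst
    linarith
  linear_combination hc - hsa - htb
end

section
/- Let P₁, P₂ ∈ ℂ[x] be polynomials of degrees d₁ ≥ 2 and d₂ ≥ 2 respectively, such that deg(P₁ + P₂) = deg(P₁ − P₂) = max(d₁, d₂). Let e_i (i = 1,2) be the polynomial automorphism of ℂ² given by (x,y) ↦ (x + P_i(y), y), let a be the automorphism (x,y) ↦ (2x + y, x + y), and set F := e₁ ∘ a and G := a ∘ e₂ ∘ a². Then for every element g of the group Γ generated by F and G, the limit λ₁(g) := lim_{n→∞} (deg(gⁿ))^{1/n} exists, and the set {λ₁(g) : g ∈ Γ} equals {d₁ᵏ · d₂ˡ : k, l ∈ ℕ}. -/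
/-!
The group `Γ` is free on `F` and `G`, and the degree of an element is read off its reduced word.

Write every letter as `F = a⁰ e₁ a¹`, `G = a¹ e₂ a²`, `F⁻¹ = a⁻¹ e₁⁻¹ a⁰`, `G⁻¹ = a⁻² e₂⁻¹ a⁻¹`.
In a reduced word the power of `a` that separates two consecutive shears `eᵢ^{±1}` is never trivial:
two adjacent exponents add up to zero only for a letter next to its own inverse
(`rightExp_add_leftExp_ne_zero`).

Since automorphisms act on the ring, multiplying `v` on the right by `h` replaces the pair
`(v(x), v(y))` by the values of `h(x), h(y)` at that pair. If `deg v(y) < deg v(x) = N`, then after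
a nontrivial power of `a` both entries have degree `N`, because the coefficients of `x` in `aᵏ(x)`
and `aᵏ(y)` are nonzero for `k ≠ 0` (`isMixing_zpow`). A shear by a polynomial of degree `d ≥ 2`
then gives degrees `d N` and `N`, which restores the inequality. Hence the degree of a reduced word
is exactly the product of the degrees of the shears occurring in it (`autDeg_word`).

If `c` is the cyclic reduction of the reduced word of `g` and `u` the conjugating word, the reduced
word of `gⁿ`, for `n ≥ 1`, is `u cⁿ u⁻¹`. So `deg gⁿ = K Dⁿ`, where `D` is the product of the degrees
of the letters of `c`, and `λ₁(g) = D` is of the form `d₁ᵏ d₂ᵐ`. The word `Fᵏ Gᵐ` attains this value.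
-/

open Filter Topology MvPolynomial

/-- The degree of a `ℂ`-algebra automorphism of `ℂ[x,y]`:
`deg g = max (deg g(x)) (deg g(y))` with total degrees. -/
noncomputable def autDeg (g : MvPolynomial (Fin 2) ℂ ≃ₐ[ℂ] MvPolynomial (Fin 2) ℂ) : ℕ :=
  max ((g (X 0)).totalDegree) ((g (X 1)).totalDegree)

/-- The `ℂ`-algebra automorphisms of `ℂ[x,y]`. -/
abbrev PolyAut := MvPolynomial (Fin 2) ℂ ≃ₐ[ℂ] MvPolynomial (Fin 2) ℂ

/-! ### Shears and mixing linear automorphisms -/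

/-- `e` is the shear `x ↦ x + P(y)`, `y ↦ y` for a polynomial `P` of degree `d`. -/
def IsShear (e : PolyAut) (d : ℕ) : Prop :=
  ∃ P : Polynomial ℂ, P.natDegree = d ∧
    e (X 0) = X 0 + Polynomial.aeval (X 1 : MvPolynomial (Fin 2) ℂ) P ∧ e (X 1) = X 1

/-- `b` is linear and the coefficients of `x` in both `b(x)` and `b(y)` are nonzero. -/
def IsMixing (b : PolyAut) : Prop :=
  ∃ α β γ δ : ℂ, α ≠ 0 ∧ γ ≠ 0 ∧
    b (X 0) = C α * X 0 + C β * X 1 ∧ b (X 1) = C γ * X 0 + C δ * X 1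

/-- `b` is linear with matrix entries of signs `(+, ε; ε, +)`. For `ε = ±1` these automorphisms are
closed under composition; `ε = 1` covers the positive powers of `a`, `ε = -1` the negative ones. -/
def IsSigned (ε : ℝ) (b : PolyAut) : Prop :=
  ∃ p q r s : ℝ, 0 < p ∧ 0 < q ∧ 0 < r ∧ 0 < s ∧
    b (X 0) = C (p : ℂ) * X 0 + C ((ε * q : ℝ) : ℂ) * X 1 ∧
    b (X 1) = C ((ε * r : ℝ) : ℂ) * X 0 + C (s : ℂ) * X 1

lemma polyAut_C (g : PolyAut) (c : ℂ) : g (C c) = C c := g.commutes c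

lemma IsShear.inv {e : PolyAut} {d : ℕ} (h : IsShear e d) : IsShear e⁻¹ d := by
  obtain ⟨P, hP, h0, h1⟩ := h
  have h1' : e⁻¹ (X 1) = X 1 := by
    conv_lhs => rw [← h1]
    exact e.symm_apply_apply _
  refine ⟨-P, by simpa using hP, ?_, h1'⟩
  have h2 : e⁻¹ (e (X 0)) = X 0 := e.symm_apply_apply _
  have h3 : e⁻¹ (Polynomial.aeval (X 1 : MvPolynomial (Fin 2) ℂ) P)
      = Polynomial.aeval (X 1 : MvPolynomial (Fin 2) ℂ) P := by
    conv_rhs => rw [← h1']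
    exact (Polynomial.aeval_algHom_apply (e⁻¹ : PolyAut).toAlgHom (X 1) P).symm
  rw [h0, map_add, h3] at h2
  rw [map_neg]
  linear_combination h2

lemma IsSigned.mul {ε : ℝ} (hε : ε * ε = 1) {b c : PolyAut} (hb : IsSigned ε b)
    (hc : IsSigned ε c) : IsSigned ε (b * c) := by
  obtain ⟨p, q, r, s, hp, hq, hr, hs, b0, b1⟩ := hb
  obtain ⟨p', q', r', s', hp', hq', hr', hs', c0, c1⟩ := hc
  have hε' : (C (ε : ℂ) : MvPolynomial (Fin 2) ℂ) * C (ε : ℂ) = 1 := by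
    rw [← C_mul, ← Complex.ofReal_mul, hε]; simp
  refine ⟨p' * p + q' * r, p' * q + q' * s, r' * p + s' * r, r' * q + s' * s,
    by positivity, by positivity, by positivity, by positivity, ?_, ?_⟩
  · rw [AlgEquiv.mul_apply, c0]
    simp only [map_add, map_mul, polyAut_C, b0, b1, Complex.ofReal_mul, Complex.ofReal_add]
    linear_combination (C (q' : ℂ) * C (r : ℂ) * X 0) * hε'
  · rw [AlgEquiv.mul_apply, c1]
    simp only [map_add, map_mul, polyAut_C, b0, b1, Complex.ofReal_mul, Complex.ofReal_add]
    linear_combination (C (r' : ℂ) * C (q : ℂ) * X 1) * hε'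

lemma IsSigned.pow {ε : ℝ} (hε : ε * ε = 1) {b : PolyAut} (hb : IsSigned ε b) (n : ℕ) :
    IsSigned ε (b ^ (n + 1)) := by
  induction n with
  | zero => simpa using hb
  | succ n ih => rw [pow_succ]; exact ih.mul hε hb

lemma IsSigned.isMixing {ε : ℝ} (hε : ε * ε = 1) {b : PolyAut} (hb : IsSigned ε b) :
    IsMixing b := by
  obtain ⟨p, q, r, s, hp, hq, hr, hs, b0, b1⟩ := hb
  have hε0 : ε ≠ 0 := by rintro rfl; simp at hε
  exact ⟨_, _, _, _, by exact_mod_cast hp.ne', by exact_mod_cast mul_ne_zero hε0 hr.ne', b0, b1⟩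

lemma isMixing_zpow {a : PolyAut} (hax : a (X 0) = 2 * X 0 + X 1) (hay : a (X 1) = X 0 + X 1)
    {k : ℤ} (hk : k ≠ 0) : IsMixing (a ^ k) := by
  have hC : (C 2 : MvPolynomial (Fin 2) ℂ) = 2 := map_ofNat C 2
  have ha : IsSigned 1 a := by
    refine ⟨2, 1, 1, 1, by norm_num, by norm_num, by norm_num, by norm_num, ?_, ?_⟩
    · rw [hax]; simp [hC]
    · rw [hay]; simp
  have hs0 : a⁻¹ (2 * X 0 + X 1) = X 0 := by rw [← hax]; exact a.symm_apply_apply _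
  have hs1 : a⁻¹ (X 0 + X 1) = X 1 := by rw [← hay]; exact a.symm_apply_apply _
  simp only [map_add, map_mul, map_ofNat] at hs0 hs1
  have ha' : IsSigned (-1) a⁻¹ := by
    refine ⟨1, 1, 1, 2, by norm_num, by norm_num, by norm_num, by norm_num, ?_, ?_⟩
    · simp
      linear_combination hs0 - hs1
    · simp [hC]
      linear_combination 2 * hs1 - hs0
  rcases lt_or_gt_of_ne hk with h | h
  · obtain ⟨n, rfl⟩ : ∃ n : ℕ, k = -((n + 1 : ℕ) : ℤ) := ⟨(-k - 1).toNat, by omega⟩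
    rw [zpow_neg, zpow_natCast, ← inv_pow]
    exact (ha'.pow (by norm_num) n).isMixing (by norm_num)
  · obtain ⟨n, rfl⟩ : ∃ n : ℕ, k = ((n + 1 : ℕ) : ℤ) := ⟨(k - 1).toNat, by omega⟩
    rw [zpow_natCast]
    exact (ha.pow (by norm_num) n).isMixing (by norm_num)

/-! ### Degree growth under right multiplication -/

lemma totalDegree_aeval_le (q : MvPolynomial (Fin 2) ℂ) (P : Polynomial ℂ) :
    (Polynomial.aeval q P).totalDegree ≤ P.natDegree * q.totalDegree := by
  rw [Polynomial.aeval_eq_sum_range]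
  refine totalDegree_finsetSum_le fun i hi => ?_
  refine (totalDegree_smul_le _ _).trans ((totalDegree_pow _ _).trans ?_)
  exact Nat.mul_le_mul_right _ (Nat.lt_succ_iff.mp (Finset.mem_range.mp hi))

lemma totalDegree_pow_eq {q : MvPolynomial (Fin 2) ℂ} (hq : q ≠ 0) (n : ℕ) :
    (q ^ n).totalDegree = n * q.totalDegree := by
  induction n with
  | zero => simp
  | succ n ih => rw [pow_succ, totalDegree_mul_of_isDomain (pow_ne_zero _ hq) hq, ih]; ring

lemma totalDegree_C_mul {α : ℂ} (hα : α ≠ 0) (q : MvPolynomial (Fin 2) ℂ) :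
    (C α * q).totalDegree = q.totalDegree := by
  rcases eq_or_ne q 0 with rfl | hq
  · simp
  · rw [totalDegree_mul_of_isDomain (by simpa using hα) hq, totalDegree_C, zero_add]

lemma totalDegree_C_mul_le (α : ℂ) (q : MvPolynomial (Fin 2) ℂ) :
    (C α * q).totalDegree ≤ q.totalDegree := by
  simpa using totalDegree_mul (C α) q

lemma totalDegree_aeval {q : MvPolynomial (Fin 2) ℂ} (hq : 0 < q.totalDegree) {P : Polynomial ℂ}
    (hP : 0 < P.natDegree) :
    (Polynomial.aeval q P).totalDegree = P.natDegree * q.totalDegree := by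
  have hq0 : q ≠ 0 := by rintro rfl; simp at hq
  have hP0 : P ≠ 0 := by rintro rfl; simp at hP
  have hlead : (C P.leadingCoeff * q ^ P.natDegree).totalDegree = P.natDegree * q.totalDegree := by
    rw [totalDegree_C_mul (by simpa using hP0), totalDegree_pow_eq hq0]
  have hlt : P.eraseLead.natDegree < P.natDegree := by
    have := P.eraseLead_natDegree_le
    omega
  conv_lhs => rw [← P.eraseLead_add_C_mul_X_pow]
  simp only [map_add, map_mul, Polynomial.aeval_C, map_pow, Polynomial.aeval_X, algebraMap_eq]
  rw [totalDegree_add_eq_right_of_totalDegree_lt, hlead]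
  rw [hlead]
  exact (totalDegree_aeval_le q _).trans_lt (Nat.mul_lt_mul_of_pos_right hlt hq)

lemma shear_step {v e : PolyAut} {d N : ℕ} (hd : 2 ≤ d) (he : IsShear e d)
    (h0 : (v (X 0)).totalDegree ≤ N) (h1 : (v (X 1)).totalDegree = N) (hN : 0 < N) :
    ((v * e) (X 0)).totalDegree = N * d ∧
      ((v * e) (X 1)).totalDegree < ((v * e) (X 0)).totalDegree := by
  obtain ⟨P, rfl, e0, e1⟩ := he
  have hlt : N < P.natDegree * N := by nlinarith
  have h2 : ((v * e) (X 0)).totalDegree = N * P.natDegree := by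
    have h3 : v (Polynomial.aeval (X 1 : MvPolynomial (Fin 2) ℂ) P)
        = Polynomial.aeval (v (X 1)) P :=
      (Polynomial.aeval_algHom_apply v.toAlgHom (X 1) P).symm
    have h4 := totalDegree_aeval (q := v (X 1)) (by omega) (P := P) (by omega)
    rw [h1] at h4
    rw [AlgEquiv.mul_apply, e0, map_add, h3, totalDegree_add_eq_right_of_totalDegree_lt, h4,
      mul_comm]
    omega
  refine ⟨h2, ?_⟩
  rw [h2, AlgEquiv.mul_apply, e1, h1, mul_comm]
  exact hlt

lemma mixing_step {v b : PolyAut} (hb : IsMixing b)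
    (h : (v (X 1)).totalDegree < (v (X 0)).totalDegree) :
    ((v * b) (X 0)).totalDegree = (v (X 0)).totalDegree ∧
      ((v * b) (X 1)).totalDegree = (v (X 0)).totalDegree := by
  obtain ⟨α, β, γ, δ, hα, hγ, b0, b1⟩ := hb
  have key : ∀ α β : ℂ, α ≠ 0 →
      (C α * v (X 0) + C β * v (X 1)).totalDegree = (v (X 0)).totalDegree := by
    intro α β hα
    have h1 := totalDegree_C_mul hα (v (X 0))
    rw [totalDegree_add_eq_left_of_totalDegree_lt, h1]
    rw [h1]
    exact (totalDegree_C_mul_le _ _).trans_lt h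
  rw [AlgEquiv.mul_apply, AlgEquiv.mul_apply, b0, b1]
  simp only [map_add, map_mul, polyAut_C]
  exact ⟨key _ _ hα, key _ _ hγ⟩

lemma totalDegree_zpow_X {a : PolyAut} (ha : ∀ k : ℤ, k ≠ 0 → IsMixing (a ^ k)) (k : ℤ) :
    ((a ^ k) (X 0)).totalDegree ≤ 1 ∧ ((a ^ k) (X 1)).totalDegree = 1 := by
  rcases eq_or_ne k 0 with rfl | hk
  · simp
  obtain ⟨α, β, γ, δ, hα, hγ, b0, b1⟩ := ha k hk
  have hle : ∀ α β : ℂ, (C α * X 0 + C β * X 1 : MvPolynomial (Fin 2) ℂ).totalDegree ≤ 1 := by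
    intro α β
    refine (totalDegree_add _ _).trans (max_le ?_ ?_)
    · simpa using totalDegree_C_mul_le α (X 0)
    · simpa using totalDegree_C_mul_le β (X 1)
  refine ⟨b0 ▸ hle _ _, le_antisymm (b1 ▸ hle _ _) ?_⟩
  rw [b1]
  -- The coefficient of the monomial `x` is `γ`, which is nonzero.
  have hc : (Finsupp.single (0 : Fin 2) 1) ∈
      (C γ * X 0 + C δ * X 1 : MvPolynomial (Fin 2) ℂ).support := by
    rw [mem_support_iff, coeff_add, coeff_C_mul, coeff_C_mul, coeff_X, coeff_X]
    simpa [Finsupp.single_left_inj] using hγ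
  simpa using le_totalDegree hc

/-! ### Degrees of reduced words -/

/-- Exponent of `a` to the left of the shear in a letter. A letter is a pair (generator, sign):
`(true, ·)` stands for `F^{±1}`, `(false, ·)` for `G^{±1}`. -/
def leftExp : Bool × Bool → ℤ
  | (true, true) => 0
  | (false, true) => 1
  | (true, false) => -1
  | (false, false) => -2

/-- Exponent of `a` to the right of the shear in a letter. -/
def rightExp : Bool × Bool → ℤ
  | (true, true) => 1
  | (false, true) => 2
  | (true, false) => 0
  | (false, false) => -1

lemma rightExp_add_leftExp_ne_zero :
    ∀ s t : Bool × Bool, (s.1 = t.1 → s.2 = t.2) → rightExp s + leftExp t ≠ 0 := by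
  decide

/-- The automorphism attached to a letter, where `e` gives the shears of the letters. -/
noncomputable def letter (a : PolyAut) (e : Bool × Bool → PolyAut) (s : Bool × Bool) : PolyAut :=
  a ^ leftExp s * e s * a ^ rightExp s

/-- The product of the degrees of the shears occurring in a word. -/
def wordDeg (d : Bool → ℕ) (L : List (Bool × Bool)) : ℕ := (L.map fun s => d s.1).prod

section Words

variable {a : PolyAut} {e : Bool × Bool → PolyAut} {d : Bool → ℕ}

lemma wordDeg_pos (hd : ∀ i, 2 ≤ d i) (L : List (Bool × Bool)) : 0 < wordDeg d L := by
  induction L with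
  | nil => simp [wordDeg]
  | cons s L ih =>
    have := hd s.1
    simp only [wordDeg, List.map_cons, List.prod_cons] at ih ⊢
    positivity

/-- A nonempty reduced word, with the final power of `a` stripped off, sends `x` to a polynomial of
degree the product of the shear degrees, and `y` to one of smaller degree. -/
lemma word_concat (ha : ∀ k : ℤ, k ≠ 0 → IsMixing (a ^ k)) (hd : ∀ i, 2 ≤ d i)
    (he : ∀ s, IsShear (e s) (d s.1)) (L : List (Bool × Bool)) :
    ∀ t, FreeGroup.IsReduced (L ++ [t]) →
    ∃ v : PolyAut, ((L ++ [t]).map (letter a e)).prod = v * a ^ rightExp t ∧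
      (v (X 0)).totalDegree = wordDeg d (L ++ [t]) ∧
      (v (X 1)).totalDegree < (v (X 0)).totalDegree := by
  induction L using List.reverseRecOn with
  | nil =>
    intro t _
    obtain ⟨h0, h1⟩ := totalDegree_zpow_X ha (leftExp t)
    obtain ⟨h2, h3⟩ := shear_step (hd t.1) (he t) h0 h1 one_pos
    exact ⟨a ^ leftExp t * e t, by simp [letter], by simpa [wordDeg] using h2, h3⟩
  | append_singleton L s ih =>
    intro t hred
    obtain ⟨v, hv, hv0, hv1⟩ := ih s (hred.infix ⟨[], [t], by simp⟩)
    have hst : s.1 = t.1 → s.2 = t.2 := by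
      have : FreeGroup.IsReduced [s, t] := hred.infix ⟨L, [], by simp⟩
      simpa using this
    obtain ⟨h0, h1⟩ := mixing_step (ha _ (rightExp_add_leftExp_ne_zero s t hst)) hv1
    obtain ⟨h2, h3⟩ := shear_step (hd t.1) (he t) h0.le h1 (by omega)
    refine ⟨v * a ^ (rightExp s + leftExp t) * e t, ?_, ?_, h3⟩
    · rw [List.map_append, List.prod_append, hv, zpow_add]
      simp [letter, mul_assoc]
    · rw [h2, hv0]
      simp [wordDeg, mul_assoc]

lemma autDeg_word (ha : ∀ k : ℤ, k ≠ 0 → IsMixing (a ^ k)) (hd : ∀ i, 2 ≤ d i)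
    (he : ∀ s, IsShear (e s) (d s.1)) (L : List (Bool × Bool)) (hL : FreeGroup.IsReduced L) :
    autDeg (L.map (letter a e)).prod = wordDeg d L := by
  rcases List.eq_nil_or_concat L with rfl | ⟨L', t, rfl⟩
  · simp [autDeg, wordDeg]
  rw [List.concat_eq_append] at hL ⊢
  obtain ⟨v, hv, h0, h1⟩ := word_concat ha hd he L' t hL
  rw [hv, ← h0, autDeg]
  rcases eq_or_ne (rightExp t) 0 with hk | hk
  · rw [hk, zpow_zero, mul_one]
    exact max_eq_left h1.le
  · obtain ⟨h2, h3⟩ := mixing_step (ha _ hk) h1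
    rw [h2, h3, max_self]

end Words

/-! ### Powers and dynamical degrees -/

lemma wordDeg_append (d : Bool → ℕ) (L M : List (Bool × Bool)) :
    wordDeg d (L ++ M) = wordDeg d L * wordDeg d M := by
  simp [wordDeg]

lemma wordDeg_flatten_replicate (d : Bool → ℕ) (L : List (Bool × Bool)) (n : ℕ) :
    wordDeg d (List.replicate n L).flatten = wordDeg d L ^ n := by
  induction n with
  | zero => simp [wordDeg]
  | succ n ih => rw [List.replicate_succ, List.flatten_cons, wordDeg_append, ih, pow_succ']

lemma exists_wordDeg_eq (d : Bool → ℕ) (L : List (Bool × Bool)) :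
    ∃ k m : ℕ, wordDeg d L = d true ^ k * d false ^ m := by
  induction L with
  | nil => exact ⟨0, 0, by simp [wordDeg]⟩
  | cons s L ih =>
    obtain ⟨k, m, h⟩ := ih
    obtain ⟨_ | _, _⟩ := s
    · exact ⟨k, m + 1, by simp only [wordDeg, List.map_cons, List.prod_cons] at h ⊢; rw [h]; ring⟩
    · exact ⟨k + 1, m, by simp only [wordDeg, List.map_cons, List.prod_cons] at h ⊢; rw [h]; ring⟩

lemma tendsto_root {f : ℕ → ℕ} {K D : ℕ} (hK : 0 < K) (h : ∀ n ≠ 0, f n = K * D ^ n) :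
    Tendsto (fun n : ℕ => (f n : ℝ) ^ ((n : ℝ)⁻¹)) atTop (𝓝 (D : ℝ)) := by
  have h1 : Tendsto (fun n : ℕ => (K : ℝ) ^ ((n : ℝ)⁻¹) * (D : ℝ)) atTop
      (𝓝 ((K : ℝ) ^ (0 : ℝ) * D)) := by
    refine Tendsto.mul_const _ ?_
    have hK0 : (K : ℝ) ≠ 0 := by exact_mod_cast hK.ne'
    exact (Real.continuousAt_const_rpow hK0).tendsto.comp tendsto_inv_atTop_nhds_zero_nat
  rw [Real.rpow_zero, one_mul] at h1
  refine h1.congr' ?_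
  filter_upwards [eventually_ne_atTop 0] with n hn
  rw [h n hn, Nat.cast_mul, Nat.cast_pow, Real.mul_rpow (by positivity) (by positivity),
    Real.pow_rpow_inv_natCast (by positivity) hn]

/-- Lemma 6.3: with `e_i : (x,y) ↦ (x + P_i(y), y)`, `a : (x,y) ↦ (2x + y, x + y)`,
`F = e₁ ∘ a`, `G = a ∘ e₂ ∘ a²`, where `deg P_i = d_i ≥ 2` and
`deg(P₁ ± P₂) = max(d₁, d₂)`, for every `g` in the group `Γ = ⟨F, G⟩` the dynamical
degree `λ₁(g) = lim (deg gⁿ)^{1/n}` exists, and the set of dynamical degrees of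
elements of `Γ` is exactly `{d₁ᵏ d₂ˡ : k, l ∈ ℕ}`. -/
theorem stmt_11 (P₁ P₂ : Polynomial ℂ) (d₁ d₂ : ℕ) (hd₁ : 2 ≤ d₁) (hd₂ : 2 ≤ d₂)
    (h₁ : P₁.natDegree = d₁) (h₂ : P₂.natDegree = d₂)
    (hsum : (P₁ + P₂).natDegree = max d₁ d₂) (hdiff : (P₁ - P₂).natDegree = max d₁ d₂)
    (e₁ e₂ a : MvPolynomial (Fin 2) ℂ ≃ₐ[ℂ] MvPolynomial (Fin 2) ℂ)
    (he₁x : e₁ (X 0) = X 0 + Polynomial.aeval (X 1 : MvPolynomial (Fin 2) ℂ) P₁)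
    (he₁y : e₁ (X 1) = X 1)
    (he₂x : e₂ (X 0) = X 0 + Polynomial.aeval (X 1 : MvPolynomial (Fin 2) ℂ) P₂)
    (he₂y : e₂ (X 1) = X 1)
    (hax : a (X 0) = 2 * X 0 + X 1)
    (hay : a (X 1) = X 0 + X 1)
    (F G : MvPolynomial (Fin 2) ℂ ≃ₐ[ℂ] MvPolynomial (Fin 2) ℂ)
    (hF : F = e₁ * a) (hG : G = a * e₂ * a ^ 2) :
    (∀ g ∈ Subgroup.closure {F, G}, ∃ l : ℝ,
      Tendsto (fun n : ℕ => (autDeg (g ^ n) : ℝ) ^ ((n : ℝ)⁻¹)) atTop (𝓝 l)) ∧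
    {l : ℝ | ∃ g ∈ Subgroup.closure {F, G},
        Tendsto (fun n : ℕ => (autDeg (g ^ n) : ℝ) ^ ((n : ℝ)⁻¹)) atTop (𝓝 l)}
      = {l : ℝ | ∃ k m : ℕ, l = (d₁ : ℝ) ^ k * (d₂ : ℝ) ^ m} := by
    classical
  let d : Bool → ℕ := fun i => cond i d₁ d₂
  let e : Bool × Bool → PolyAut := fun s => cond s.2 (cond s.1 e₁ e₂) (cond s.1 e₁ e₂)⁻¹
  let φ : FreeGroup Bool →* PolyAut := FreeGroup.lift fun i => cond i F G
  have ha : ∀ k : ℤ, k ≠ 0 → IsMixing (a ^ k) := fun k hk => isMixing_zpow hax hay hk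
  have hd : ∀ i, 2 ≤ d i := by rintro (_ | _) <;> assumption
  have he : ∀ s, IsShear (e s) (d s.1) := by
    have he₁ : IsShear e₁ d₁ := ⟨P₁, h₁, he₁x, he₁y⟩
    have he₂ : IsShear e₂ d₂ := ⟨P₂, h₂, he₂x, he₂y⟩
    rintro ⟨_ | _, _ | _⟩
    exacts [he₂.inv, he₂, he₁.inv, he₁]
  have hletter : (fun s : Bool × Bool => cond s.2 (cond s.1 F G) (cond s.1 F G)⁻¹)
      = letter a e := by
    funext s
    obtain ⟨_ | _, _ | _⟩ := s <;>
      simp only [letter, leftExp, rightExp, e, cond_true, cond_false, hF, hG] <;> group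
  have hφ : ∀ L, FreeGroup.IsReduced L → autDeg (φ (FreeGroup.mk L)) = wordDeg d L := by
    intro L hL
    rw [← autDeg_word ha hd he L hL, ← hletter, FreeGroup.lift_mk]
  have hrange : Subgroup.closure {F, G} = φ.range := by
    rw [FreeGroup.range_lift_eq_closure]
    congr 1
    ext g
    simp [eq_comm, or_comm]
  have hlim : ∀ w : FreeGroup Bool, Tendsto (fun n : ℕ => (autDeg (φ w ^ n) : ℝ) ^ ((n : ℝ)⁻¹))
      atTop (𝓝 (wordDeg d (FreeGroup.reduceCyclically w.toWord) : ℝ)) := by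
    intro w
    let u := FreeGroup.reduceCyclically.conjugator w.toWord
    refine tendsto_root (K := wordDeg d u * wordDeg d (FreeGroup.invRev u))
      (Nat.mul_pos (wordDeg_pos hd _) (wordDeg_pos hd _)) fun n hn => ?_
    have hw : (w ^ n).toWord = u ++
        (List.replicate n (FreeGroup.reduceCyclically w.toWord)).flatten ++ FreeGroup.invRev u := by
      rw [FreeGroup.toWord_pow,
        FreeGroup.reduceCyclically.reduce_flatten_replicate FreeGroup.isReduced_toWord, if_neg hn]
    rw [← map_pow, ← FreeGroup.mk_toWord (x := w ^ n), hφ _ FreeGroup.isReduced_toWord, hw,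
      wordDeg_append, wordDeg_append, wordDeg_flatten_replicate]
    ring
  rw [hrange]
  refine ⟨?_, Set.Subset.antisymm ?_ ?_⟩
  · rintro _ ⟨w, rfl⟩
    exact ⟨_, hlim w⟩
  · rintro l ⟨_, ⟨w, rfl⟩, hl⟩
    obtain ⟨k, m, h⟩ := exists_wordDeg_eq d (FreeGroup.reduceCyclically w.toWord)
    refine ⟨k, m, (tendsto_nhds_unique hl (hlim w)).trans ?_⟩
    rw [h]
    push_cast
    rfl
  · rintro _ ⟨k, m, rfl⟩
    let W : List (Bool × Bool) := List.replicate k (true, true) ++ List.replicate m (false, true)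
    have hW : ∀ s ∈ W, s.2 = true := by
      intro s hs
      rcases List.mem_append.mp hs with hs | hs <;> rw [List.eq_of_mem_replicate hs]
    refine ⟨φ (FreeGroup.mk W), ⟨_, rfl⟩, ?_⟩
    have hdeg : wordDeg d W = d₁ ^ k * d₂ ^ m := by
      simp [W, wordDeg, d]
    have hcast : (d₁ : ℝ) ^ k * (d₂ : ℝ) ^ m = ((d₁ ^ k * d₂ ^ m : ℕ) : ℝ) := by push_cast; rfl
    rw [hcast, ← hdeg]
    refine tendsto_root (K := 1) one_pos fun n _ => ?_
    -- A positive word is reduced, since no letter is followed by its inverse.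
    have hred : FreeGroup.IsReduced (List.replicate n W).flatten := by
      refine List.Pairwise.isChain (List.pairwise_of_forall_mem_list fun s hs t ht _ => ?_)
      have key : ∀ s ∈ (List.replicate n W).flatten, s.2 = true := by
        intro s hs
        obtain ⟨M, hM, hsM⟩ := List.mem_flatten.mp hs
        exact hW s (List.eq_of_mem_replicate hM ▸ hsM)
      rw [key s hs, key t ht]
    rw [← map_pow, FreeGroup.pow_mk, hφ _ hred, wordDeg_flatten_replicate, one_mul]
end

section
/- Let P₁, P₂ ∈ ℂ[x] be polynomials of the same degree d ≥ 2 such that deg(P₁ + P₂) = deg(P₁ − P₂) = d. Let e_i (i = 1,2) be the polynomial automorphism of ℂ² given by (x,y) ↦ (x + P_i(y), y), let a be the automorphism (x,y) ↦ (2x + y, x + y), and set F := e₁ ∘ a and G := a ∘ e₂ ∘ a². Then for every n ≥ 1 and every word w = w₁ ∘ w₂ ∘ ⋯ ∘ w_n with each w_i ∈ {F, G}, one has deg(w) = dⁿ. -/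
/-!
Write `p = u (X 0)`, `q = u (X 1)` for an automorphism `u`. Multiplying `u` on the right by `eᵢ`
replaces `(p, q)` by `(p + Pᵢ(q), q)`, and multiplying by `a` replaces it by `(2p + q, p + q)`.
Call `u` balanced of degree `D` when `deg p ≤ D` and `deg q = deg (p + q) = D`; this says that the
second coordinate has full degree `D` both for `u` and for `u * a`. Applying `eᵢ` then makes the
first coordinate dominate, with degree `dD > D ≥ deg q` (`totalDegree_add_aeval`). Since the
powers of `a` have positive integer entries, after one or two further applications of `a` the
coordinates and their sum are of the form `m p' + k q'` with `m ≠ 0`, where `(p', q')` is the pair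
just after `eᵢ`, and hence have degree exactly `dD`. So right multiplication by `F` or `G` turns
balanced of degree `D` into balanced of degree `dD`, and the identity is balanced of degree `1`.
-/


open MvPolynomial

/-- Over a domain, substituting a nonconstant `q` in a univariate polynomial multiplies degrees. -/
lemma totalDegree_aeval_eq (P : Polynomial ℂ) (q : MvPolynomial (Fin 2) ℂ)
    (hq : 1 ≤ q.totalDegree) :
    (Polynomial.aeval q P).totalDegree = P.natDegree * q.totalDegree := by
  have hq0 : q ≠ 0 := by
    rintro rfl
    simp at hq
  rcases Nat.eq_zero_or_pos P.natDegree with h0 | hpos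
  · rw [Polynomial.eq_C_of_natDegree_eq_zero h0]
    simp [MvPolynomial.algebraMap_eq]
  have hterm : ∀ (c : ℂ) (i : ℕ), (c • q ^ i).totalDegree ≤ i * q.totalDegree := fun c i =>
    (totalDegree_smul_le _ _).trans (totalDegree_pow _ _)
  have hlead : (P.coeff P.natDegree • q ^ P.natDegree).totalDegree
      = P.natDegree * q.totalDegree := by
    have hc : P.coeff P.natDegree ≠ 0 := by
      intro h
      have hP : P = 0 := Polynomial.leadingCoeff_eq_zero.1 h
      simp [hP] at hpos
    have hpow : ∀ k : ℕ, (q ^ k).totalDegree = k * q.totalDegree := by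
      intro k
      induction k with
      | zero => simp
      | succ k ih =>
        rw [pow_succ, totalDegree_mul_of_isDomain (pow_ne_zero _ hq0) hq0, ih, Nat.succ_mul]
    rw [smul_eq_C_mul, totalDegree_mul_of_isDomain (by simpa using hc) (pow_ne_zero _ hq0),
      totalDegree_C, zero_add, hpow]
  rw [Polynomial.aeval_eq_sum_range, Finset.sum_range_succ,
    totalDegree_add_eq_right_of_totalDegree_lt, hlead]
  rw [hlead]
  refine lt_of_le_of_lt (totalDegree_finsetSum_le (d := (P.natDegree - 1) * q.totalDegree) ?_) ?_
  · intro i hi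
    have hi' := Finset.mem_range.1 hi
    exact (hterm _ i).trans (Nat.mul_le_mul_right _ (by omega))
  · exact Nat.mul_lt_mul_of_pos_right (by omega) hq

/-- The term `P(q)` dominates in the first coordinate `p + P(q)` produced by an elementary
automorphism. -/
lemma totalDegree_add_aeval (P : Polynomial ℂ) (d D : ℕ) (hd : 2 ≤ d) (hP : P.natDegree = d)
    (hD : 1 ≤ D) (p q : MvPolynomial (Fin 2) ℂ) (hp : p.totalDegree ≤ D)
    (hq : q.totalDegree = D) :
    (p + Polynomial.aeval q P).totalDegree = d * D := by
  have h := totalDegree_aeval_eq P q (by omega)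
  rw [hP, hq] at h
  rw [totalDegree_add_eq_right_of_totalDegree_lt, h]
  rw [h]
  nlinarith

lemma totalDegree_comb (m k : ℂ) (hm : m ≠ 0) (p q : MvPolynomial (Fin 2) ℂ)
    (h : q.totalDegree < p.totalDegree) :
    (C m * p + C k * q).totalDegree = p.totalDegree := by
  have hp0 : p ≠ 0 := by
    rintro rfl
    simp at h
  have h1 : (C m * p).totalDegree = p.totalDegree := by
    rw [totalDegree_mul_of_isDomain (by simpa using hm) hp0, totalDegree_C, zero_add]
  have h2 : (C k * q).totalDegree ≤ q.totalDegree := by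
    simpa using totalDegree_mul (C k) q
  rw [totalDegree_add_eq_left_of_totalDegree_lt, h1]
  omega

/-- `u` is balanced of degree `D` if `deg u(x) ≤ D` and both `u(y)` and `u(x) + u(y)` have
degree exactly `D`. -/
def BalancedAut (u : MvPolynomial (Fin 2) ℂ ≃ₐ[ℂ] MvPolynomial (Fin 2) ℂ) (D : ℕ) : Prop :=
  (u (X 0)).totalDegree ≤ D ∧ (u (X 1)).totalDegree = D ∧ (u (X 0) + u (X 1)).totalDegree = D

lemma balancedAut_one : BalancedAut 1 1 := by
  refine ⟨by simp, by simp, le_antisymm ((totalDegree_add _ _).trans (by simp)) ?_⟩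
  have hmem : Finsupp.single (0 : Fin 2) 1 ∈ (X 0 + X 1 : MvPolynomial (Fin 2) ℂ).support := by
    simp [mem_support_iff, coeff_X, Finsupp.single_left_inj]
  simpa using le_totalDegree hmem

/-- The degree identity in the proof of Propositions 6.2 and 1.1: with
`e_i : (x,y) ↦ (x + P_i(y), y)`, `a : (x,y) ↦ (2x + y, x + y)`, `F = e₁ ∘ a`,
`G = a ∘ e₂ ∘ a²`, where `deg P₁ = deg P₂ = deg(P₁ + P₂) = deg(P₁ - P₂) = d ≥ 2`,
every word of length `n ≥ 1` in `F` and `G` has degree `dⁿ`. -/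
theorem stmt_12 (P₁ P₂ : Polynomial ℂ) (d : ℕ) (hd : 2 ≤ d)
    (h₁ : P₁.natDegree = d) (h₂ : P₂.natDegree = d)
    (hsum : (P₁ + P₂).natDegree = d) (hdiff : (P₁ - P₂).natDegree = d)
    (e₁ e₂ a : MvPolynomial (Fin 2) ℂ ≃ₐ[ℂ] MvPolynomial (Fin 2) ℂ)
    (he₁x : e₁ (X 0) = X 0 + Polynomial.aeval (X 1 : MvPolynomial (Fin 2) ℂ) P₁)
    (he₁y : e₁ (X 1) = X 1)
    (he₂x : e₂ (X 0) = X 0 + Polynomial.aeval (X 1 : MvPolynomial (Fin 2) ℂ) P₂)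
    (he₂y : e₂ (X 1) = X 1)
    (hax : a (X 0) = 2 * X 0 + X 1)
    (hay : a (X 1) = X 0 + X 1)
    (F G : MvPolynomial (Fin 2) ℂ ≃ₐ[ℂ] MvPolynomial (Fin 2) ℂ)
    (hF : F = e₁ * a) (hG : G = a * e₂ * a ^ 2) :
    ∀ n : ℕ, 1 ≤ n → ∀ w : Fin n → MvPolynomial (Fin 2) ℂ ≃ₐ[ℂ] MvPolynomial (Fin 2) ℂ,
      (∀ i, w i = F ∨ w i = G) → autDeg (List.ofFn w).prod = d ^ n := by
  have hax' : ∀ u : MvPolynomial (Fin 2) ℂ ≃ₐ[ℂ] MvPolynomial (Fin 2) ℂ,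
      (u * a) (X 0) = 2 * u (X 0) + u (X 1) := by
    intro u
    rw [AlgEquiv.mul_apply, hax, map_add, map_mul, map_ofNat]
  have hay' : ∀ u : MvPolynomial (Fin 2) ℂ ≃ₐ[ℂ] MvPolynomial (Fin 2) ℂ,
      (u * a) (X 1) = u (X 0) + u (X 1) := by
    intro u
    simp [hay]
  have hC : ∀ k : ℕ, (C (k : ℂ) : MvPolynomial (Fin 2) ℂ) = k := fun k => map_natCast C k
  -- An elementary automorphism makes the first coordinate dominant.
  have elem : ∀ (P : Polynomial ℂ) (e u : MvPolynomial (Fin 2) ℂ ≃ₐ[ℂ] MvPolynomial (Fin 2) ℂ)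
      (D : ℕ), 1 ≤ D → P.natDegree = d →
      e (X 0) = X 0 + Polynomial.aeval (X 1 : MvPolynomial (Fin 2) ℂ) P → e (X 1) = X 1 →
      (u (X 0)).totalDegree ≤ D → (u (X 1)).totalDegree = D →
      ((u * e) (X 0)).totalDegree = d * D ∧
        ((u * e) (X 1)).totalDegree < ((u * e) (X 0)).totalDegree := by
    intro P e u D hD hP hx hy hp hq
    have h : ((u * e) (X 0)).totalDegree = d * D := by
      rw [AlgEquiv.mul_apply, hx, map_add, ← Polynomial.aeval_algHom_apply]
      exact totalDegree_add_aeval P d D hd hP hD _ _ hp hq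
    refine ⟨h, ?_⟩
    rw [h, AlgEquiv.mul_apply, hy, hq]
    nlinarith
  have comb : ∀ (v : MvPolynomial (Fin 2) ℂ ≃ₐ[ℂ] MvPolynomial (Fin 2) ℂ) (m k : ℕ), m ≠ 0 →
      (v (X 1)).totalDegree < (v (X 0)).totalDegree →
      ((m : MvPolynomial (Fin 2) ℂ) * v (X 0) + (k : MvPolynomial (Fin 2) ℂ) * v (X 1)).totalDegree
        = (v (X 0)).totalDegree := by
    intro v m k hm h
    rw [← hC, ← hC]
    exact totalDegree_comb m k (by exact_mod_cast hm) _ _ h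
  have stepF : ∀ u D, 1 ≤ D → BalancedAut u D → BalancedAut (u * F) (d * D) := by
    rintro u D hD ⟨hp, hq, -⟩
    obtain ⟨h1, h2⟩ := elem P₁ e₁ u D hD h₁ he₁x he₁y hp hq
    rw [hF, ← mul_assoc]
    refine ⟨le_of_eq ?_, ?_, ?_⟩
    · rw [hax', ← h1, ← comb _ 2 1 (by norm_num) h2]
      congr 1
      push_cast
      ring
    · rw [hay', ← h1, ← comb _ 1 1 (by norm_num) h2]
      congr 1
      push_cast
      ring
    · rw [hax', hay', ← h1, ← comb _ 3 2 (by norm_num) h2]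
      congr 1
      push_cast
      ring
  have stepG : ∀ u D, 1 ≤ D → BalancedAut u D → BalancedAut (u * G) (d * D) := by
    rintro u D hD ⟨hp, hq, hpq⟩
    have hp' : ((u * a) (X 0)).totalDegree ≤ D := by
      have : (u * a) (X 0) = u (X 0) + (u (X 0) + u (X 1)) := by
        rw [hax']
        ring
      rw [this]
      exact (totalDegree_add _ _).trans (max_le hp hpq.le)
    have hq' : ((u * a) (X 1)).totalDegree = D := by rw [hay', hpq]
    obtain ⟨h1, h2⟩ := elem P₂ e₂ (u * a) D hD h₂ he₂x he₂y hp' hq'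
    have hw : u * G = u * a * e₂ * a * a := by rw [hG, pow_two]; simp only [mul_assoc]
    rw [hw]
    refine ⟨le_of_eq ?_, ?_, ?_⟩
    · rw [hax', hax', hay', ← h1, ← comb _ 5 3 (by norm_num) h2]
      congr 1
      push_cast
      ring
    · rw [hay', hax', hay', ← h1, ← comb _ 3 2 (by norm_num) h2]
      congr 1
      push_cast
      ring
    · rw [hax', hay' (_ * a), hax', hay', ← h1, ← comb _ 8 5 (by norm_num) h2]
      congr 1
      push_cast
      ring
  have key : ∀ l : List (MvPolynomial (Fin 2) ℂ ≃ₐ[ℂ] MvPolynomial (Fin 2) ℂ),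
      (∀ s ∈ l, s = F ∨ s = G) → BalancedAut l.prod (d ^ l.length) := by
    intro l
    induction l using List.reverseRecOn with
    | nil => intro _; simpa using balancedAut_one
    | append_singleton l s ih =>
      intro hl
      have hb := ih fun t ht => hl t (by simp [ht])
      have hD : 1 ≤ d ^ l.length := Nat.one_le_pow _ _ (by omega)
      rw [List.prod_append, List.prod_singleton, List.length_append, List.length_singleton,
        pow_succ']
      rcases hl s (by simp) with rfl | rfl
      · exact stepF _ _ hD hb
      · exact stepG _ _ hD hb
  intro n _ w hw
  obtain ⟨h0, h1, -⟩ := key (List.ofFn w) (by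
    intro s hs
    obtain ⟨i, rfl⟩ := List.mem_ofFn.1 hs
    exact hw i)
  rw [List.length_ofFn] at h0 h1
  rw [autDeg, h1]
  exact max_eq_right h0
end
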